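/- Let (I_p) be the polynomial sieving system of f and F the associated difference-root polynomial. For every nonzero integer v, every prime p with v mod p ∈ I_p − I_p divides F(v); consequently N(v) ≤ ω(F(v)), and there is a constant C_f such that N(v) ≤ C_f(log|v| + 1) for all nonzero integers v. In particular, hypothesis (f) holds: N(v) ≪ v^{0.49} for all v ≥ 1. -/

import Mathlib

open scoped BigOperators Pointwise Classical

noncomputable section

/-- The set of primes `p` such that `v mod p ∈ I_p - I_p`; `N(v)` is its cardinality. -/
def Nset (I : ∀ p : ℕ, Finset (ZMod p)) (v : ℤ) : Set ℕ :=
  {p : ℕ | p.Prime ∧ (v : ZMod p) ∈ (I p - I p)}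

/-!
Two zeros of `g = t f` modulo `p` that differ by `v` give a common zero modulo `p` of `g(x)` and
`g(x + v)`, so `p` divides the resultant of these two integer polynomials. Up to a power of the
leading coefficient of `g`, this resultant is `F(v)`. An irreducible rational polynomial has no two
roots differing by a nonzero rational number: otherwise it would divide its own translate and have
an infinite arithmetic progression of roots. Hence `F(v)` is a nonzero integer for `v ≠ 0`, with at
most `log₂ |F(v)| ≪ log |v| + 1` prime factors.
-/

section

open Polynomial

lemma algebraMap_resultant_eq_zero_of_aeval_eq_zero {R A : Type*} [CommRing R] [CommRing A]
    [Algebra R A] {f g : R[X]} {m n : ℕ} (hf : f.natDegree ≤ m) (hg : g.natDegree ≤ n)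
    (hmn : m ≠ 0 ∨ n ≠ 0) {a : A} (hfa : aeval a f = 0) (hga : aeval a g = 0) :
    algebraMap R A (resultant f g m n) = 0 := by
  obtain ⟨u, w, -, -, huw⟩ := exists_mul_add_mul_eq_C_resultant f g hf hg hmn
  simpa [hfa, hga] using (congrArg (aeval a) huw).symm

section ProductOfLinearFactors

variable {R : Type*} [CommRing R] {d : ℕ}

lemma natDegree_C_mul_prod_X_sub_C_le (c : R) (r : Fin d → R) :
    (C c * ∏ i, (X - C (r i))).natDegree ≤ d := by
  nontriviality R
  have hdeg : (∏ i, (X - C (r i))).natDegree = d := by simp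
  exact (natDegree_C_mul_le c _).trans_eq hdeg

lemma coeff_C_mul_prod_X_sub_C (c : R) (r : Fin d → R) :
    (C c * ∏ i, (X - C (r i))).coeff d = c := by
  nontriviality R
  have hmonic : (∏ i, (X - C (r i))).Monic := monic_prod_X_sub_C r Finset.univ
  have hdeg : (∏ i, (X - C (r i))).natDegree = d := by simp
  have hcoeff : (∏ i, (X - C (r i))).coeff d = 1 := by
    simpa only [hdeg] using hmonic.coeff_natDegree
  rw [coeff_C_mul, hcoeff, mul_one]

lemma resultant_C_mul_prod_X_sub_C_left (c : R) (r : Fin d → R) {q : R[X]} {n : ℕ}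
    (hq : q.natDegree ≤ n) :
    resultant (C c * ∏ i, (X - C (r i))) q d n = c ^ n * ∏ i, q.eval (r i) := by
  nontriviality R
  have hprod := resultant_prod_left Finset.univ (fun i ↦ X - C (r i)) q n (by simp) hq
  simp only [natDegree_finsetProd_X_sub_C_eq_card, Finset.card_univ, Fintype.card_fin,
    natDegree_X_sub_C, resultant_X_sub_C_left q n _ hq] at hprod
  rw [resultant_C_mul_left, hprod]

/-- The difference-root polynomial `F = c^(d²+d) ∏ (X - (r i - r j))` of `c ∏ (X - r i)`, over all
ordered pairs `(i, j)`, including those with `i = j`. The power of `c` makes `F` integer-valued on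
the integers when `c ∏ (X - r i)` has integer coefficients. -/
def differenceRootPoly (c : R) (r : Fin d → R) : R[X] :=
  C (c ^ (d ^ 2 + d)) * ∏ ij : Fin d × Fin d, (X - C (r ij.1 - r ij.2))

lemma eval_differenceRootPoly (c : R) (r : Fin d → R) (v : R) :
    (differenceRootPoly c r).eval v =
      c ^ (d ^ 2 + d) * ∏ i, ∏ j, (v - (r i - r j)) := by
  simp only [differenceRootPoly, eval_mul, eval_C, eval_prod, eval_sub, eval_X,
    Fintype.prod_prod_type]

lemma eval_differenceRootPoly_ne_zero [IsDomain R] {c : R} (hc : c ≠ 0) {r : Fin d → R} {v : R}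
    (hv : ∀ i j, r i - r j ≠ v) : (differenceRootPoly c r).eval v ≠ 0 := by
  rw [eval_differenceRootPoly]
  exact mul_ne_zero (pow_ne_zero _ hc) <| Finset.prod_ne_zero_iff.mpr fun i _ ↦
    Finset.prod_ne_zero_iff.mpr fun j _ ↦ sub_ne_zero.mpr (hv i j).symm

lemma eval_differenceRootPoly_eq_resultant (c : R) (r : Fin d → R) (v : R) :
    (differenceRootPoly c r).eval v =
      c ^ (d ^ 2 - d) * resultant (C c * ∏ i, (X - C (r i)))
        (taylor v (C c * ∏ i, (X - C (r i)))) d d := by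
  have hdeg : (taylor v (C c * ∏ i, (X - C (r i)))).natDegree ≤ d := by
    rw [natDegree_taylor]
    exact natDegree_C_mul_prod_X_sub_C_le c r
  have heval (j : Fin d) : (taylor v (C c * ∏ i, (X - C (r i)))).eval (r j) =
      c * ∏ i, (v - (r i - r j)) := by
    simp only [taylor_eval, eval_mul, eval_C, eval_prod, eval_sub, eval_X]
    congr! 2
    ring
  have hexp : d ^ 2 + d = (d ^ 2 - d) + d + d := by
    have : d ≤ d ^ 2 := Nat.le_self_pow two_ne_zero d
    omega
  rw [resultant_C_mul_prod_X_sub_C_left c r hdeg, eval_differenceRootPoly, Finset.prod_comm, hexp,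
    pow_add, pow_add]
  simp only [heval, Finset.prod_mul_distrib, Finset.prod_const, Finset.card_univ, Fintype.card_fin]
  ring

lemma eval_differenceRootPoly_map {S : Type*} [CommRing S] {φ : R →+* S} {g : R[X]} {c : S}
    {r : Fin d → S} (hg : g.map φ = C c * ∏ i, (X - C (r i))) (v : R) :
    (differenceRootPoly c r).eval (φ v) =
      φ (g.coeff d ^ (d ^ 2 - d) * resultant g (taylor v g) d d) := by
  have hc : φ (g.coeff d) = c := by
    rw [← coeff_map, hg, coeff_C_mul_prod_X_sub_C]
  rw [eval_differenceRootPoly_eq_resultant, ← hg, ← map_taylor, resultant_map_map, map_mul, map_pow,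
    hc]

end ProductOfLinearFactors

section Irreducible

variable {K L : Type*} [Field K] [CommRing L] [IsDomain L] [Algebra K L]

lemma dvd_taylor_of_irreducible {f : K[X]} (hf : Irreducible f) {x : L} {v : K}
    (hx : aeval x f = 0) (hxv : aeval (x + algebraMap K L v) f = 0) : f ∣ taylor v f := by
  refine (Dvd.intro _ (minpoly.eq_of_irreducible hf hx)).trans (minpoly.dvd K x ?_)
  simpa [taylor_apply, aeval_comp] using hxv

lemma eq_zero_of_dvd_taylor [CharZero K] {f : K[X]} (hf : f ≠ 0) {x : L} {v : K}
    (hx : aeval x f = 0) (hv : f ∣ taylor v f) : v = 0 := by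
  by_contra hv0
  have hstep {y : L} (hy : aeval y f = 0) : aeval (y + algebraMap K L v) f = 0 := by
    simpa [taylor_apply, aeval_comp] using aeval_eq_zero_of_dvd_aeval_eq_zero hv hy
  have hroot (n : ℕ) : aeval (x + algebraMap K L (n * v)) f = 0 := by
    induction n with
    | zero => simpa using hx
    | succ n ih => simpa [add_mul, add_assoc] using hstep ih
  have hinj : Function.Injective fun n : ℕ ↦ x + algebraMap K L (n * v) := fun m n hmn ↦ by
    simpa only [add_right_inj, (algebraMap K L).injective.eq_iff, mul_eq_mul_right_iff, hv0,
      or_false, Nat.cast_inj] using hmn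
  exact Set.infinite_of_injective_forall_mem hinj
    (fun n ↦ (mem_rootSet_of_ne hf).mpr (hroot n)) (f.rootSet_finite L)

lemma root_sub_root_ne_algebraMap_of_irreducible [CharZero K] {f : K[X]} (hf : Irreducible f)
    {x y : L} (hx : aeval x f = 0) (hy : aeval y f = 0) {v : K} (hv : v ≠ 0) :
    x - y ≠ algebraMap K L v := by
  intro hxy
  have hyv : aeval (y + algebraMap K L v) f = 0 := by rwa [← hxy, add_sub_cancel]
  exact hv (eq_zero_of_dvd_taylor hf.ne_zero hy (dvd_taylor_of_irreducible hf hy hyv))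

lemma aeval_eq_zero_of_map_C_mul_eq {f : K[X]} {t : K} (ht : t ≠ 0) {d : ℕ} {c : L}
    {r : Fin d → L} (h : (C t * f).map (algebraMap K L) = C c * ∏ i, (X - C (r i))) (i : Fin d) :
    aeval (r i) f = 0 := by
  have heval := congrArg (eval (r i)) h
  simpa [eval_prod, Finset.prod_eq_zero (Finset.mem_univ i), ht] using heval

lemma sub_ne_intCast_of_map_C_mul_eq [CharZero K] {f : K[X]} (hf : Irreducible f) {t : K}
    (ht : t ≠ 0) {d : ℕ} {c : L} {r : Fin d → L}
    (h : (C t * f).map (algebraMap K L) = C c * ∏ i, (X - C (r i))) (v : ℤ) (hv : v ≠ 0)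
    (i j : Fin d) : r i - r j ≠ v := by
  simpa using root_sub_root_ne_algebraMap_of_irreducible hf (aeval_eq_zero_of_map_C_mul_eq ht h i)
    (aeval_eq_zero_of_map_C_mul_eq ht h j) (Int.cast_ne_zero (α := K).mpr hv)

end Irreducible

lemma card_primeFactors_mul_log_two_le (n : ℕ) :
    (n.primeFactors.card : ℝ) * Real.log 2 ≤ Real.log n := by
  rcases eq_or_ne n 0 with rfl | hn
  · simp
  have hpow : 2 ^ n.primeFactors.card ≤ n := calc
    2 ^ n.primeFactors.card ≤ ∏ p ∈ n.primeFactors, p :=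
      Finset.pow_card_le_prod _ _ _ fun p hp ↦ (Nat.prime_of_mem_primeFactors hp).two_le
    _ ≤ n := Nat.le_of_dvd (Nat.pos_of_ne_zero hn) (Nat.prod_primeFactors_dvd n)
  rw [← Real.log_pow]
  exact Real.log_le_log (by positivity) (mod_cast hpow)

lemma norm_eval_le_sum_norm_coeff_mul_pow {A : Type*} [NormedRing A] [NormOneClass A] (P : A[X])
    {z : A} (hz : 1 ≤ ‖z‖) :
    ‖P.eval z‖ ≤ (∑ i ∈ Finset.range (P.natDegree + 1), ‖P.coeff i‖) * ‖z‖ ^ P.natDegree := by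
  rw [eval_eq_sum_range, Finset.sum_mul]
  refine norm_sum_le_of_le _ fun i hi ↦ ?_
  have hi' : i ≤ P.natDegree := Finset.mem_range_succ_iff.mp hi
  calc ‖P.coeff i * z ^ i‖ ≤ ‖P.coeff i‖ * ‖z ^ i‖ := norm_mul_le _ _
    _ ≤ ‖P.coeff i‖ * ‖z‖ ^ i := by gcongr; exact norm_pow_le z i
    _ ≤ ‖P.coeff i‖ * ‖z‖ ^ P.natDegree := by gcongr

lemma exists_log_norm_eval_le {A : Type*} [NormedRing A] [NormOneClass A] (P : A[X]) :
    ∃ C : ℝ, 0 < C ∧ ∀ z : A, 1 ≤ ‖z‖ → Real.log ‖P.eval z‖ ≤ C * (Real.log ‖z‖ + 1) := by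
  set B : ℝ := 2 + ∑ i ∈ Finset.range (P.natDegree + 1), ‖P.coeff i‖
  have hB : 1 < B := by
    have : 0 ≤ ∑ i ∈ Finset.range (P.natDegree + 1), ‖P.coeff i‖ := by positivity
    linarith
  have hlogB : 0 < Real.log B := Real.log_pos hB
  refine ⟨Real.log B + P.natDegree, by positivity, fun z hz ↦ ?_⟩
  have hlogz : 0 ≤ Real.log ‖z‖ := Real.log_nonneg hz
  rcases (norm_nonneg (P.eval z)).eq_or_lt with h0 | hpos
  · rw [← h0, Real.log_zero]
    positivity
  calc Real.log ‖P.eval z‖ ≤ Real.log (B * ‖z‖ ^ P.natDegree) := by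
        refine Real.log_le_log hpos ((norm_eval_le_sum_norm_coeff_mul_pow P hz).trans ?_)
        gcongr
        exact le_add_of_nonneg_left zero_le_two
    _ = Real.log B + P.natDegree * Real.log ‖z‖ := by
        rw [Real.log_mul (by positivity) (by positivity), Real.log_pow]
    _ ≤ (Real.log B + P.natDegree) * (Real.log ‖z‖ + 1) := by
        nlinarith [mul_nonneg hlogB.le hlogz, Nat.cast_nonneg (α := ℝ) P.natDegree]

lemma exists_card_primeFactors_eval_le (P : ℂ[X]) :
    ∃ C : ℝ, 0 < C ∧ ∀ v n : ℤ, v ≠ 0 → (n : ℂ) = P.eval (v : ℂ) →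
      (n.natAbs.primeFactors.card : ℝ) ≤ C * (Real.log |(v : ℝ)| + 1) := by
  obtain ⟨B, hB, hlog⟩ := exists_log_norm_eval_le P
  have hlog2 : 0 < Real.log 2 := Real.log_pos one_lt_two
  refine ⟨B / Real.log 2, by positivity, fun v n hv hn ↦ ?_⟩
  have hv1 : 1 ≤ ‖(v : ℂ)‖ := by
    rw [Complex.norm_intCast]
    exact_mod_cast Int.one_le_abs hv
  have hnorm : ((n.natAbs : ℕ) : ℝ) = ‖P.eval (v : ℂ)‖ := by
    rw [← hn, Complex.norm_intCast, Nat.cast_natAbs, Int.cast_abs]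
  rw [div_mul_eq_mul_div, le_div_iff₀ hlog2, ← Complex.norm_intCast]
  exact (card_primeFactors_mul_log_two_le n.natAbs).trans (hnorm ▸ hlog v hv1)

lemma log_add_one_le_mul_rpow {x ε : ℝ} (hx : 1 ≤ x) (hε : 0 < ε) :
    Real.log x + 1 ≤ (1 + 1 / ε) * x ^ ε := by
  have hlog : Real.log x ≤ x ^ ε / ε := Real.log_le_rpow_div (by linarith) hε
  have hone : 1 ≤ x ^ ε := Real.one_le_rpow hx hε.le
  calc Real.log x + 1 ≤ x ^ ε / ε + x ^ ε := add_le_add hlog hone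
    _ = (1 + 1 / ε) * x ^ ε := by ring

lemma exists_map_intCast_eq_C_mul {f : ℚ[X]} {t : ℚ} (h : ∀ n, ∃ m : ℤ, t * f.coeff n = m) :
    ∃ g : ℤ[X], g.map (Int.castRingHom ℚ) = C t * f := by
  refine (mem_lifts _).mp ((lifts_iff_coeff_lifts _).mpr fun n ↦ ?_)
  obtain ⟨m, hm⟩ := h n
  exact ⟨m, by simp [hm]⟩

lemma map_intCast_complex_eq {f : ℚ[X]} {g : ℤ[X]} (h : g.map (Int.castRingHom ℚ) = f) :
    g.map (Int.castRingHom ℂ) = f.map (algebraMap ℚ ℂ) := by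
  rw [← h, Polynomial.map_map, RingHom.eq_intCast' ((algebraMap ℚ ℂ).comp (Int.castRingHom ℚ))]

lemma aeval_intCast_zmod_eq_zero {f : ℚ[X]} {g : ℤ[X]} {t : ℤ}
    (hg : g.map (Int.castRingHom ℚ) = C (t : ℚ) * f) {p : ℕ} {m k : ℤ}
    (hk : f.eval (m : ℚ) = k) (hpk : (p : ℤ) ∣ k) : aeval (m : ZMod p) g = 0 := by
  have heval : g.eval m = t * k := by
    have h : ((g.eval m : ℤ) : ℚ) = (g.map (Int.castRingHom ℚ)).eval (m : ℚ) := by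
      simp [eval_intCast_map]
    rw [hg, eval_mul, eval_C, hk] at h
    exact_mod_cast h
  have haeval : aeval (m : ZMod p) g = ((g.eval m : ℤ) : ZMod p) := by
    simpa using aeval_algebraMap_apply_eq_algebraMap_eval (A := ZMod p) m g
  rw [haeval, heval, ZMod.intCast_zmod_eq_zero_iff_dvd]
  exact hpk.mul_left t

/-- The family `I` is the polynomial sieving system of the integer-valued polynomial `f` of degree
`d`: `I p` is empty for `p ≤ d` and the set of zeros of `f` modulo `p` for `p > d`. As `f` may not
have a reduction modulo `p`, a zero is a residue class of an integer `m` with `p ∣ f(m)`. The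
divisibility is vacuous when `f(m)` is not an integer. -/
def IsPolynomialSievingSystem (f : ℚ[X]) (d : ℕ) (I : ∀ p : ℕ, Finset (ZMod p)) : Prop :=
  ∀ p : ℕ, p.Prime →
    (p ≤ d → I p = ∅) ∧
    (d < p → ∀ a : ZMod p, a ∈ I p ↔
      ∃ m : ℤ, (m : ZMod p) = a ∧ ∀ v : ℤ, (v : ℚ) = f.eval (m : ℚ) → (p : ℤ) ∣ v)

lemma IsPolynomialSievingSystem.aeval_eq_zero {f : ℚ[X]} {d : ℕ} {I : ∀ p : ℕ, Finset (ZMod p)}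
    (hI : IsPolynomialSievingSystem f d I) (hint : ∀ n : ℤ, ∃ m : ℤ, f.eval (n : ℚ) = m)
    {g : ℤ[X]} {t : ℤ} (hg : g.map (Int.castRingHom ℚ) = C (t : ℚ) * f) (p : ℕ) (hp : p.Prime)
    (a : ZMod p) (ha : a ∈ I p) : aeval a g = 0 := by
  have hdp : d < p := by
    by_contra! hpd
    simp [(hI p hp).1 hpd] at ha
  obtain ⟨m, rfl, hm⟩ := ((hI p hp).2 hdp a).mp ha
  obtain ⟨k, hk⟩ := hint m
  exact aeval_intCast_zmod_eq_zero hg hk (hm k hk.symm)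

lemma natCast_dvd_eval_differenceRootPoly {g : ℤ[X]} {d : ℕ} (hd : d ≠ 0) {c : ℂ} {r : Fin d → ℂ}
    (hg : g.map (Int.castRingHom ℂ) = C c * ∏ i, (X - C (r i))) {p : ℕ} {a b : ZMod p}
    (ha : aeval a g = 0) (hb : aeval b g = 0) {v n : ℤ} (hv : a - b = v)
    (hn : (n : ℂ) = (differenceRootPoly c r).eval (v : ℂ)) : (p : ℤ) ∣ n := by
  have hn' : n = g.coeff d ^ (d ^ 2 - d) * resultant g (taylor v g) d d := by
    rw [← eq_intCast (Int.castRingHom ℂ) v, eval_differenceRootPoly_map hg, eq_intCast] at hn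
    exact_mod_cast hn
  have hdeg : g.natDegree ≤ d := by
    rw [← natDegree_map_eq_of_injective (RingHom.injective_int (Int.castRingHom ℂ)), hg]
    exact natDegree_C_mul_prod_X_sub_C_le c r
  have htaylor : aeval b (taylor v g) = 0 := by
    simpa [taylor_apply, aeval_comp, ← hv] using ha
  have hres := algebraMap_resultant_eq_zero_of_aeval_eq_zero hdeg
    ((natDegree_taylor g v).trans_le hdeg) (.inl hd) hb htaylor
  rw [hn']
  exact ((ZMod.intCast_zmod_eq_zero_iff_dvd _ p).mp hres).mul_left _

lemma Nset_subset_primeFactors {I : ∀ p : ℕ, Finset (ZMod p)} {v n : ℤ} (hn : n ≠ 0)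
    (h : ∀ p : ℕ, p.Prime → (v : ZMod p) ∈ I p - I p → (p : ℤ) ∣ n) :
    Nset I v ⊆ n.natAbs.primeFactors := fun p ⟨hp, hpv⟩ ↦
  Nat.mem_primeFactors.mpr ⟨hp, Int.natCast_dvd.mp (h p hp hpv), Int.natAbs_ne_zero.mpr hn⟩

theorem stmt14_general {g : ℤ[X]} {d : ℕ} (hd : d ≠ 0) {c : ℂ} (hc : c ≠ 0) {r : Fin d → ℂ}
    (hg : g.map (Int.castRingHom ℂ) = C c * ∏ i, (X - C (r i)))
    (hr : ∀ v : ℤ, v ≠ 0 → ∀ i j, r i - r j ≠ v)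
    {I : ∀ p : ℕ, Finset (ZMod p)} (hI : ∀ p : ℕ, p.Prime → ∀ a ∈ I p, aeval a g = 0) :
    ∃ Cf : ℝ, 0 < Cf ∧
      (∀ v : ℤ, v ≠ 0 →
        (∀ p : ℕ, p.Prime → (v : ZMod p) ∈ (I p - I p) →
          ∀ vF : ℤ, (vF : ℂ) = (differenceRootPoly c r).eval (v : ℂ) → (p : ℤ) ∣ vF) ∧
        (Nset I v).Finite ∧
        (∀ vF : ℤ, (vF : ℂ) = (differenceRootPoly c r).eval (v : ℂ) →
          (Nset I v).ncard ≤ vF.natAbs.primeFactors.card) ∧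
        ((Nset I v).ncard : ℝ) ≤ Cf * (Real.log |(v : ℝ)| + 1)) ∧
      (∀ v : ℤ, 1 ≤ v → ((Nset I v).ncard : ℝ) ≤ Cf * (v : ℝ) ^ (0.49 : ℝ)) := by
  have hdvd (v : ℤ) (p : ℕ) (hp : p.Prime) (hv : (v : ZMod p) ∈ I p - I p) (n : ℤ)
      (hn : (n : ℂ) = (differenceRootPoly c r).eval (v : ℂ)) : (p : ℤ) ∣ n := by
    obtain ⟨a, ha, b, hb, hab⟩ := Finset.mem_sub.mp hv
    exact natCast_dvd_eval_differenceRootPoly hd hg (hI p hp a ha) (hI p hp b hb) hab hn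
  have hint (v : ℤ) : ∃ n : ℤ, (n : ℂ) = (differenceRootPoly c r).eval (v : ℂ) :=
    ⟨_, (eval_differenceRootPoly_map hg v).symm⟩
  have hsub (v : ℤ) (hv : v ≠ 0) (n : ℤ)
      (hn : (n : ℂ) = (differenceRootPoly c r).eval (v : ℂ)) :
      Nset I v ⊆ n.natAbs.primeFactors := by
    have hn0 : (n : ℂ) ≠ 0 := hn ▸ eval_differenceRootPoly_ne_zero hc (hr v hv)
    exact Nset_subset_primeFactors (mod_cast hn0) fun p hp hpv ↦ hdvd v p hp hpv n hn
  have hcard (v : ℤ) (hv : v ≠ 0) (n : ℤ)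
      (hn : (n : ℂ) = (differenceRootPoly c r).eval (v : ℂ)) :
      (Nset I v).ncard ≤ n.natAbs.primeFactors.card := by
    simpa using Set.ncard_le_ncard (hsub v hv n hn) (Finset.finite_toSet _)
  obtain ⟨B, hB, hbound⟩ := exists_card_primeFactors_eval_le (differenceRootPoly c r)
  have hlog (v : ℤ) (hv : v ≠ 0) : ((Nset I v).ncard : ℝ) ≤ B * (Real.log |(v : ℝ)| + 1) := by
    obtain ⟨n, hn⟩ := hint v
    exact (Nat.cast_le.mpr (hcard v hv n hn)).trans (hbound v n hv hn)
  refine ⟨B * (1 + 1 / 0.49), by positivity, fun v hv ↦ ⟨hdvd v, ?_, hcard v hv, ?_⟩, fun v hv ↦ ?_⟩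
  · obtain ⟨n, hn⟩ := hint v
    exact (Finset.finite_toSet _).subset (hsub v hv n hn)
  · have hlogv : 0 ≤ Real.log |(v : ℝ)| := Real.log_nonneg (mod_cast Int.one_le_abs hv)
    refine (hlog v hv).trans ?_
    gcongr
    exact le_mul_of_one_le_right hB.le (by norm_num)
  · have hv1 : (1 : ℝ) ≤ v := mod_cast hv
    have hlogv := hlog v (by omega)
    rw [abs_of_nonneg (by linarith)] at hlogv
    refine hlogv.trans ?_
    rw [mul_assoc]
    gcongr
    exact log_add_one_le_mul_rpow hv1 (by norm_num)

end

/-- **Hypothesis (f) for polynomial sieving systems.**  Every prime `p` with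
`v mod p ∈ I_p - I_p` divides the integer `F(v)`; consequently `N(v) ≤ ω(F(v))`,
`N(v) ≤ C_f (log|v| + 1)` and in particular `N(v) ≪ v^{0.49}` for `v ≥ 1`. -/
theorem stmt14 (f : Polynomial ℚ) (d : ℕ) (hdeg : f.natDegree = d) (hd1 : 1 ≤ d)
    (hint : ∀ n : ℤ, ∃ m : ℤ, f.eval (n : ℚ) = (m : ℚ))
    (hlead : 0 < f.leadingCoeff)
    (hirr : Irreducible f)
    -- `t` is the minimal positive integer with `t·f ∈ ℤ[x]`
    (t : ℕ) (ht : 0 < t)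
    (htf : ∀ n : ℕ, ∃ m : ℤ, (t : ℚ) * f.coeff n = (m : ℚ))
    (htmin : ∀ t' : ℕ, 0 < t' → (∀ n : ℕ, ∃ m : ℤ, (t' : ℚ) * f.coeff n = (m : ℚ)) → t ≤ t')
    -- `c` is the leading coefficient of `f̃ = t·f` and `r 0, …, r (d-1)` its complex roots
    (c : ℂ) (hc : c = (t : ℂ) * (f.map (algebraMap ℚ ℂ)).leadingCoeff)
    (r : Fin d → ℂ)
    (hroots : (Polynomial.C (t : ℚ) * f).map (algebraMap ℚ ℂ)
      = Polynomial.C c * ∏ i : Fin d, (Polynomial.X - Polynomial.C (r i)))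
    -- `F(x) = c^{d²+d} ∏_{1 ≤ i,j ≤ d} (x - (r_i - r_j))`
    (F : Polynomial ℂ)
    (hF : F = Polynomial.C (c ^ (d ^ 2 + d)) *
      ∏ ij : Fin d × Fin d, (Polynomial.X - Polynomial.C (r ij.1 - r ij.2)))
    -- the polynomial sieving system of `f`
    (I : ∀ p : ℕ, Finset (ZMod p))
    (hI : ∀ p : ℕ, p.Prime →
      (p ≤ d → I p = ∅) ∧
      (d < p → ∀ nres : ZMod p, nres ∈ I p ↔
        ∃ m : ℤ, ((m : ZMod p) = nres ∧ ∀ v : ℤ, (v : ℚ) = f.eval (m : ℚ) → (p : ℤ) ∣ v)))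
    :
    ∃ Cf : ℝ, 0 < Cf ∧
      (∀ v : ℤ, v ≠ 0 →
        (∀ p : ℕ, p.Prime → (v : ZMod p) ∈ (I p - I p) →
          ∀ vF : ℤ, (vF : ℂ) = F.eval ((v : ℤ) : ℂ) → (p : ℤ) ∣ vF) ∧
        (Nset I v).Finite ∧
        (∀ vF : ℤ, (vF : ℂ) = F.eval ((v : ℤ) : ℂ) →
          (Nset I v).ncard ≤ vF.natAbs.primeFactors.card) ∧
        ((Nset I v).ncard : ℝ) ≤ Cf * (Real.log |(v : ℝ)| + 1)) ∧
      (∀ v : ℤ, 1 ≤ v → ((Nset I v).ncard : ℝ) ≤ Cf * (v : ℝ) ^ (0.49 : ℝ)) := by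
  obtain ⟨g, hg⟩ := exists_map_intCast_eq_C_mul htf
  have ht0 : (t : ℚ) ≠ 0 := Nat.cast_ne_zero.mpr ht.ne'
  have hc0 : c ≠ 0 := by simp [hc, ht.ne', hirr.ne_zero]
  have hsieve : IsPolynomialSievingSystem f d I := hI
  exact hF ▸ stmt14_general (Nat.one_le_iff_ne_zero.mp hd1) hc0
    ((map_intCast_complex_eq hg).trans hroots) (sub_ne_intCast_of_map_C_mul_eq hirr ht0 hroots)
    (hsieve.aeval_eq_zero hint (t := t) (mod_cast hg))

end
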